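/- arXiv:2209.05823 — 3 statements merged into one kernel-verified Lean document; each statement's English description precedes it below -/
import Mathlib

section
/- Let σ: S ↷ G be an algebraic action. (i) For φ ∈ I, one has φ ∈ I^e if and only if e ∈ dom(φ) and φ(e) = e. (ii) Every φ ∈ I with nonempty domain is of the form φ = t_h ∘ ψ ∘ t_{g⁻¹} for some ψ ∈ I^e and g, h ∈ G; more precisely, if dom(φ) = gC for some g ∈ G and C ∈ 𝒞, and h := φ(g), then ψ := t_{h⁻¹} ∘ φ ∘ t_g belongs to I^e. -/
open scoped Pointwise

/-- The family of `S`-constructible subgroups of `G`. -/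
inductive IsConstructible {S G : Type*} [Monoid S] [Group G]
    (σ : S →* Monoid.End G) : Subgroup G → Prop
  | top : IsConstructible σ ⊤
  | map : ∀ (s : S) (C : Subgroup G), IsConstructible σ C →
      IsConstructible σ (Subgroup.map (σ s) C)
  | comap : ∀ (s : S) (C : Subgroup G), IsConstructible σ C →
      IsConstructible σ (Subgroup.comap (σ s) C)

/- We model partial bijections of `G` by their graphs, i.e. subsets of `G × G`
that are graphs of injective partial functions; equality of graphs is exactly
equality of partial bijections. -/

/-- Graph of an everywhere-defined function. -/
def grph {G : Type*} (f : G → G) : Set (G × G) := {p | p.2 = f p.1}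

/-- Composition `φ ∘ ψ` of partial bijections (apply `ψ` first), as graphs. -/
def rcomp {G : Type*} (φ ψ : Set (G × G)) : Set (G × G) :=
  {p | ∃ y, (p.1, y) ∈ ψ ∧ (y, p.2) ∈ φ}

/-- Inverse of a partial bijection, as graphs. -/
def rinv {G : Type*} (φ : Set (G × G)) : Set (G × G) := {p | (p.2, p.1) ∈ φ}

/-- Domain of a partial bijection. -/
def rdom {G : Type*} (φ : Set (G × G)) : Set G := {x | ∃ y, (x, y) ∈ φ}

/-- The identity map on a subset `A ⊆ G`, as a graph. -/
def idOn {G : Type*} (A : Set G) : Set (G × G) := {p | p.1 = p.2 ∧ p.1 ∈ A}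

/-- Membership in the inverse semigroup of partial bijections generated by a
set of generators: closure under composition and inversion. -/
inductive MemInvSemigroup {G : Type*} (gens : Set (Set (G × G))) : Set (G × G) → Prop
  | base : ∀ φ ∈ gens, MemInvSemigroup gens φ
  | comp : ∀ φ ψ, MemInvSemigroup gens φ → MemInvSemigroup gens ψ →
      MemInvSemigroup gens (rcomp φ ψ)
  | inv : ∀ φ, MemInvSemigroup gens φ → MemInvSemigroup gens (rinv φ)

/-- The inverse semigroup `I` generated by the endomorphisms `σ_s` and the left
translations `t_g`. -/
def memI {S G : Type*} [Monoid S] [Group G] (σ : S →* Monoid.End G) :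
    Set (G × G) → Prop :=
  MemInvSemigroup ({φ | ∃ s : S, φ = grph (σ s : G → G)} ∪
    {φ | ∃ g : G, φ = grph (fun h : G => g * h)})


/-- The inverse semigroup `I^e` generated by the endomorphisms `σ_s` alone. -/
def memIe {S G : Type*} [Monoid S] [Group G] (σ : S →* Monoid.End G) :
    Set (G × G) → Prop :=
  MemInvSemigroup {φ | ∃ s : S, φ = grph (σ s : G → G)}

/-! A translate `t_{h⁻¹} ∘ φ ∘ t_g` of a partial bijection has as its graph the translate
`(g, h)⁻¹ • φ` of the graph of `φ` in the group `G × G`. If `(g, h)` lies on the graph of a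
generator, this translate is again `σ_s`, or the identity `σ_1` when the generator is a
translation. Translation by `(g, h)⁻¹` is compatible with composition and inversion, so
`(g, h)⁻¹ • φ ∈ I^e` for every `φ ∈ I` and every point `(g, h)` of its graph. -/

section Graph

@[simp]
theorem mk_mem_grph {G : Type*} {f : G → G} {x y : G} : (x, y) ∈ grph f ↔ y = f x :=
  Iff.rfl

@[simp]
theorem mk_mem_rcomp {G : Type*} {φ ψ : Set (G × G)} {x z : G} :
    (x, z) ∈ rcomp φ ψ ↔ ∃ y, (x, y) ∈ ψ ∧ (y, z) ∈ φ :=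
  Iff.rfl

@[simp]
theorem mk_mem_rinv {G : Type*} {φ : Set (G × G)} {x y : G} :
    (x, y) ∈ rinv φ ↔ (y, x) ∈ φ :=
  Iff.rfl

variable {G : Type*} [Group G]

theorem mk_mem_smul_iff {a b x y : G} {φ : Set (G × G)} :
    (x, y) ∈ (a, b) • φ ↔ (a⁻¹ * x, b⁻¹ * y) ∈ φ :=
  Set.mem_smul_set_iff_inv_smul_mem

theorem mk_mem_inv_smul_iff {a b x y : G} {φ : Set (G × G)} :
    (x, y) ∈ (a, b)⁻¹ • φ ↔ (a * x, b * y) ∈ φ :=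
  Set.mem_inv_smul_set_iff

theorem inv_smul_rcomp (a b c : G) (φ ψ : Set (G × G)) :
    (a, c)⁻¹ • rcomp φ ψ = rcomp ((b, c)⁻¹ • φ) ((a, b)⁻¹ • ψ) := by
  ext ⟨x, z⟩
  simp only [mk_mem_rcomp, mk_mem_inv_smul_iff]
  exact (Equiv.mulLeft b).surjective.exists

theorem inv_smul_rinv (a b : G) (φ : Set (G × G)) :
    (a, b)⁻¹ • rinv φ = rinv ((b, a)⁻¹ • φ) := by
  ext ⟨x, y⟩
  simp only [mk_mem_rinv, mk_mem_inv_smul_iff]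

theorem rcomp_mulLeft_rcomp_mulLeft_inv (a b : G) (φ : Set (G × G)) :
    rcomp (grph (b * ·)) (rcomp φ (grph (a⁻¹ * ·))) = (a, b) • φ := by
  ext ⟨x, y⟩
  simp only [mk_mem_rcomp, mk_mem_grph, mk_mem_smul_iff, exists_eq_left]
  simp only [← inv_mul_eq_iff_eq_mul, exists_eq_right']

theorem rcomp_mulLeft_inv_rcomp_mulLeft (a b : G) (φ : Set (G × G)) :
    rcomp (grph (b⁻¹ * ·)) (rcomp φ (grph (a * ·))) = (a, b)⁻¹ • φ := by
  simpa only [inv_inv, Prod.inv_mk] using rcomp_mulLeft_rcomp_mulLeft_inv a⁻¹ b⁻¹ φ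

theorem inv_smul_grph_monoidHom (f : G →* G) (g : G) :
    (g, f g)⁻¹ • grph f = grph f := by
  ext ⟨x, y⟩
  simp only [mk_mem_inv_smul_iff, mk_mem_grph, map_mul, mul_right_inj]

theorem inv_smul_grph_mulLeft (k g : G) : (g, k * g)⁻¹ • grph (k * ·) = grph id := by
  ext ⟨x, y⟩
  simp only [mk_mem_inv_smul_iff, mk_mem_grph, mul_assoc, mul_right_inj, id_eq]

end Graph

namespace MemInvSemigroup

theorem diag_mem {G : Type*} {gens : Set (Set (G × G))} {x : G}
    (hgens : ∀ φ ∈ gens, (x, x) ∈ φ) {φ : Set (G × G)} (hφ : MemInvSemigroup gens φ) :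
    (x, x) ∈ φ := by
  induction hφ with
  | base φ hφ => exact hgens φ hφ
  | comp _ _ _ _ ihφ ihψ => exact ⟨x, ihψ, ihφ⟩
  | inv _ _ ih => exact ih

theorem inv_smul {G : Type*} [Group G] {gens gens' : Set (Set (G × G))}
    (hgens : ∀ φ ∈ gens, ∀ g h : G, (g, h) ∈ φ → MemInvSemigroup gens' ((g, h)⁻¹ • φ))
    {φ : Set (G × G)} (hφ : MemInvSemigroup gens φ) {g h : G} (hgh : (g, h) ∈ φ) :
    MemInvSemigroup gens' ((g, h)⁻¹ • φ) := by
  induction hφ generalizing g h with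
  | base φ hφ => exact hgens φ hφ g h hgh
  | comp _ _ _ _ ihφ ihψ =>
    obtain ⟨k, hgk, hkh⟩ := hgh
    rw [inv_smul_rcomp g k h]
    exact comp _ _ (ihφ hkh) (ihψ hgk)
  | inv _ _ ih =>
    rw [inv_smul_rinv]
    exact inv _ (ih hgh)

end MemInvSemigroup

section AlgebraicAction

variable {S G : Type*} [Monoid S] [Group G] {σ : S →* Monoid.End G} {φ : Set (G × G)}

theorem memIe.one_mem (hφ : memIe σ φ) : ((1 : G), (1 : G)) ∈ φ := by
  refine MemInvSemigroup.diag_mem ?_ hφ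
  rintro _ ⟨s, rfl⟩
  exact (map_one (σ s)).symm

theorem memI.inv_smul_memIe (hφ : memI σ φ) {g h : G} (hgh : (g, h) ∈ φ) :
    memIe σ ((g, h)⁻¹ • φ) := by
  refine MemInvSemigroup.inv_smul ?_ hφ hgh
  rintro _ (⟨s, rfl⟩ | ⟨k, rfl⟩) g h hgh
  · obtain rfl : h = σ s g := hgh
    exact .base _ ⟨s, inv_smul_grph_monoidHom (σ s) g⟩
  · obtain rfl : h = k * g := hgh
    exact .base _ ⟨1, by rw [inv_smul_grph_mulLeft, map_one, Monoid.End.coe_one]⟩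

theorem memI.memIe_iff_one_mem (hφ : memI σ φ) : memIe σ φ ↔ ((1 : G), (1 : G)) ∈ φ := by
  refine ⟨memIe.one_mem, fun h => ?_⟩
  simpa only [← Prod.one_eq_mk, inv_one, one_smul] using hφ.inv_smul_memIe h

end AlgebraicAction

theorem standard_form_general {S G : Type*} [Monoid S] [Group G] (σ : S →* Monoid.End G)
    {φ : Set (G × G)} (hφ : memI σ φ) :
    (memIe σ φ ↔ ((1 : G), (1 : G)) ∈ φ) ∧
    ((rdom φ).Nonempty → ∃ (g h : G) (ψ : Set (G × G)), memIe σ ψ ∧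
      φ = rcomp (grph (h * ·)) (rcomp ψ (grph (g⁻¹ * ·)))) ∧
    ∀ g h : G, (g, h) ∈ φ → memIe σ (rcomp (grph (h⁻¹ * ·)) (rcomp φ (grph (g * ·)))) := by
  refine ⟨hφ.memIe_iff_one_mem, ?_, fun g h hgh => ?_⟩
  · rintro ⟨g, h, hgh⟩
    refine ⟨g, h, (g, h)⁻¹ • φ, hφ.inv_smul_memIe hgh, ?_⟩
    rw [rcomp_mulLeft_rcomp_mulLeft_inv, smul_inv_smul]
  · rw [rcomp_mulLeft_inv_rcomp_mulLeft]
    exact hφ.inv_smul_memIe hgh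

/-- Proposition 2.11 (prop:stform), standard form for elements of `I`:
(i) for `φ ∈ I`, `φ ∈ I^e` iff `e ∈ dom(φ)` and `φ(e) = e`;
(ii) every `φ ∈ I` with nonempty domain has the form `t_h ∘ ψ ∘ t_{g⁻¹}` with
`ψ ∈ I^e`; more precisely, if `dom(φ) = gC` with `C ∈ 𝒞` and `φ(g) = h`, then
`t_{h⁻¹} ∘ φ ∘ t_g ∈ I^e`. -/
theorem standard_form {S G : Type*} [Monoid S] [Group G] [Nontrivial G]
    (σ : S →* Monoid.End G)
    (hinj : ∀ s : S, Function.Injective (σ s))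
    (hfaith : Function.Injective σ) :
    (∀ φ : Set (G × G), memI σ φ → (memIe σ φ ↔ ((1 : G), (1 : G)) ∈ φ)) ∧
    (∀ φ : Set (G × G), memI σ φ → (rdom φ).Nonempty →
      ∃ (g h : G) (ψ : Set (G × G)), memIe σ ψ ∧
        φ = rcomp (grph (fun x : G => h * x))
              (rcomp ψ (grph (fun x : G => g⁻¹ * x)))) ∧
    (∀ φ : Set (G × G), memI σ φ → ∀ (g h : G) (C : Subgroup G), IsConstructible σ C →
      rdom φ = g • (C : Set G) → (g, h) ∈ φ →
      memIe σ (rcomp (grph (fun x : G => h⁻¹ * x))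
        (rcomp φ (grph (fun x : G => g * x))))) := by
  exact ⟨fun _ hφ => (standard_form_general σ hφ).1, fun _ hφ => (standard_form_general σ hφ).2.1,
    fun _ hφ g h _ _ _ => (standard_form_general σ hφ).2.2 g h⟩
end

section
/- Let σ: S ↷ G be a non-automorphic algebraic action. Given 𝔛 ⊆ ∂Ê and ω ∈ ∂Ê, one has that ω lies in the closure of the set {t_k.χ : k ∈ G, χ ∈ 𝔛} if and only if 𝔉(ω) ⊆ ⋃_{χ ∈ 𝔛} 𝔉(χ). -/
open scoped Pointwise

/-- The semilattice `ℰ` of `S`-constructible cosets together with `∅`. -/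
def ECoset {S G : Type*} [Monoid S] [Group G] (σ : S →* Monoid.End G) : Set (Set G) :=
  {E | E = ∅ ∨ ∃ (g : G) (C : Subgroup G), IsConstructible σ C ∧ E = g • (C : Set G)}

/-- A character of `ℰ`: multiplicative, sends `∅` to `0` and `G` to `1`.
(We represent characters as Boolean functions on `Set G`, pinned to `false`
outside `ℰ`, so that equality of characters is equality of functions and the
topology of pointwise convergence is the product topology.) -/
def IsChar {S G : Type*} [Monoid S] [Group G] (σ : S →* Monoid.End G)
    (χ : Set G → Bool) : Prop :=
  χ ∅ = false ∧ χ Set.univ = true ∧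
  (∀ E F : Set G, E ∈ ECoset σ → F ∈ ECoset σ → χ (E ∩ F) = (χ E && χ F)) ∧
  (∀ E : Set G, E ∉ ECoset σ → χ E = false)

/-- The filter of a character: the collection of elements of `ℰ` on which it is `1`. -/
def charFilter {G : Type*} (χ : Set G → Bool) : Set (Set G) := {E | χ E = true}

/-- A character is maximal if its filter is maximal with respect to inclusion. -/
def IsMaxChar {S G : Type*} [Monoid S] [Group G] (σ : S →* Monoid.End G)
    (χ : Set G → Bool) : Prop :=
  IsChar σ χ ∧ ∀ ω : Set G → Bool, IsChar σ ω → charFilter χ ⊆ charFilter ω →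
    charFilter ω = charFilter χ

/-- The boundary `∂Ê`: the closure of the set of maximal characters, inside the
character space `Ê`. -/
def Boundary {S G : Type*} [Monoid S] [Group G] (σ : S →* Monoid.End G) :
    Set (Set G → Bool) :=
  {χ | IsChar σ χ} ∩ closure {χ : Set G → Bool | IsMaxChar σ χ}

/-- `𝔉(χ)`: the filter on `𝒞` induced by a character `χ`, consisting of those
constructible subgroups `C` with `χ(gC) = 1` for some `g`. -/
def FilC {S G : Type*} [Monoid S] [Group G] (σ : S →* Monoid.End G)
    (χ : Set G → Bool) : Set (Subgroup G) :=
  {C | IsConstructible σ C ∧ ∃ g : G, χ (g • (C : Set G)) = true}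

/-- Translation of a character by a group element: `(t_k.χ)(E) = χ(k⁻¹E)`. -/
def charTranslate {G : Type*} [Group G] (k : G) (χ : Set G → Bool) : Set G → Bool :=
  fun E => χ (k⁻¹ • E)

/-!
Every `χ ∈ Ê` generates a proper filter on `G`, and every proper filter on `G` restricts to a
character of `ℰ`. If `χ` is maximal, its filter contains `F` or `Fᶜ` for each `F ∈ ℰ`; hence on a
finite `I ⊆ ℰ` any `ω ∈ ∂Ê` agrees with the point mass `E ↦ [x ∈ E]` at some `x ∈ G`, and `x` can
be chosen in a coset `xC` with `ω(xC) = 1` that is contained in every `E ∈ I` with `ω(E) = 1`.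

Now let `χ` be a character with `C ∈ 𝔉(χ)`. Translates of a given `E` are equal or disjoint, so at
most one of them has `χ`-value `1`, and some `y` with `χ(yC) = 1` lies in all those that come from
the finitely many `E ∈ I`. The translate of `χ` by `xy⁻¹` then agrees with `ω` on `I`.
-/

open Filter Topology in
theorem mem_closure_iff_forall_finset_eq {ι : Type*} {α : ι → Type*}
    [∀ i, TopologicalSpace (α i)] [∀ i, DiscreteTopology (α i)] {A : Set (∀ i, α i)}
    {f : ∀ i, α i} :
    f ∈ closure A ↔ ∀ I : Finset ι, ∃ g ∈ A, ∀ i ∈ I, g i = f i := by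
  have h_basis : (𝓝 f).HasBasis Set.Finite fun I => I.pi fun i => {f i} := by
    simp only [nhds_pi, nhds_discrete, ← principal_singleton]
    exact hasBasis_pi_principal _
  rw [mem_closure_iff_nhds_basis h_basis]
  simp only [Set.mem_pi, Set.mem_singleton_iff]
  exact ⟨fun h I => h I I.finite_toSet, fun h I hI => by simpa using h hI.toFinset⟩

theorem leftCoset_eq_of_mem {G : Type*} [Group G] {C : Subgroup G} {g x : G}
    (h : x ∈ g • (C : Set G)) : g • (C : Set G) = x • (C : Set G) :=
  (leftCoset_eq_iff C).2 ((mem_leftCoset_iff g).1 h)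

theorem map_inf_eq_map_inf_comap {G N : Type*} [Group G] [Group N] (f : G →* N)
    (C : Subgroup G) (D : Subgroup N) : C.map f ⊓ D = (C ⊓ D.comap f).map f :=
  SetLike.coe_injective (Set.image_inter_preimage f C D).symm

theorem comap_inf_eq_comap_inf_map {G N : Type*} [Group G] [Group N] {f : G →* N}
    (hf : Function.Injective f) (C : Subgroup N) (D : Subgroup G) :
    C.comap f ⊓ D = (C ⊓ D.map f).comap f := by
  rw [Subgroup.comap_inf, Subgroup.comap_map_eq_self_of_injective hf]

section Characters

open Filter

variable {S G : Type*} [Monoid S] [Group G] {σ : S →* Monoid.End G}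

theorem IsConstructible.inf (hinj : ∀ s, Function.Injective (σ s)) {C D : Subgroup G}
    (hC : IsConstructible σ C) (hD : IsConstructible σ D) : IsConstructible σ (C ⊓ D) := by
  induction hC generalizing D with
  | top => rwa [top_inf_eq]
  | map s C _ ih => exact map_inf_eq_map_inf_comap (σ s) C D ▸ (ih (hD.comap s)).map s
  | comap s C _ ih =>
    exact comap_inf_eq_comap_inf_map (hinj s) C D ▸ (ih (hD.map s)).comap s

namespace ECoset

theorem inter_mem (hinj : ∀ s, Function.Injective (σ s)) {E F : Set G}
    (hE : E ∈ ECoset σ) (hF : F ∈ ECoset σ) : E ∩ F ∈ ECoset σ := by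
  rcases (E ∩ F).eq_empty_or_nonempty with h_empty | ⟨x, hxE, hxF⟩
  · exact Or.inl h_empty
  obtain rfl | ⟨g, C, hC, rfl⟩ := hE
  · exact hxE.elim
  obtain rfl | ⟨h, D, hD, rfl⟩ := hF
  · exact hxF.elim
  refine Or.inr ⟨x, C ⊓ D, hC.inf hinj hD, ?_⟩
  rw [leftCoset_eq_of_mem hxE, leftCoset_eq_of_mem hxF, Subgroup.coe_inf, Set.smul_set_inter]

theorem smul_mem (k : G) {E : Set G} (hE : E ∈ ECoset σ) : k • E ∈ ECoset σ := by
  obtain rfl | ⟨g, C, hC, rfl⟩ := hE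
  · exact Or.inl Set.smul_set_empty
  · exact Or.inr ⟨k * g, C, hC, smul_smul k g _⟩

theorem smul_mem_iff (k : G) {E : Set G} : k • E ∈ ECoset σ ↔ E ∈ ECoset σ :=
  ⟨fun h => inv_smul_smul k E ▸ smul_mem k⁻¹ h, smul_mem k⟩

theorem smul_eq_smul_of_mem {E : Set G} (hE : E ∈ ECoset σ) {p q x : G}
    (hp : x ∈ p • E) (hq : x ∈ q • E) : p • E = q • E := by
  obtain rfl | ⟨g, C, -, rfl⟩ := hE
  · simp only [Set.smul_set_empty]
  rw [smul_smul] at hp hq ⊢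
  rw [smul_smul, leftCoset_eq_of_mem hp, leftCoset_eq_of_mem hq]

end ECoset

open Classical in
/-- The character of `ℰ` given by a proper filter `l` on `G`: the indicator of `l ∩ ℰ`. -/
noncomputable def charOfFilter (σ : S →* Monoid.End G) (l : Filter G) : Set G → Bool :=
  fun E => decide (E ∈ ECoset σ ∧ E ∈ l)

theorem charOfFilter_eq_true_iff {l : Filter G} {E : Set G} :
    charOfFilter σ l E = true ↔ E ∈ ECoset σ ∧ E ∈ l := by
  classical exact decide_eq_true_iff

theorem isChar_charOfFilter (hinj : ∀ s, Function.Injective (σ s)) (l : Filter G) [l.NeBot] :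
    IsChar σ (charOfFilter σ l) := by
  refine ⟨?_, ?_, fun E F hE hF => ?_, fun E hE => ?_⟩
  · simp [charOfFilter]
  · exact charOfFilter_eq_true_iff.2
      ⟨Or.inr ⟨1, ⊤, .top, by rw [one_smul, Subgroup.coe_top]⟩, univ_mem⟩
  · rw [Bool.eq_iff_iff, Bool.and_eq_true]
    simp only [charOfFilter_eq_true_iff, hE, hF, ECoset.inter_mem hinj hE hF, true_and,
      inter_mem_iff]
  · simp [charOfFilter, hE]

namespace IsChar
variable {χ : Set G → Bool} {E F : Set G}

theorem mem_eCoset (hχ : IsChar σ χ) (hE : χ E = true) : E ∈ ECoset σ := by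
  by_contra h
  exact Bool.false_ne_true ((hχ.2.2.2 E h).symm.trans hE)

theorem inter_eq_true (hχ : IsChar σ χ) (hE : χ E = true) (hF : χ F = true) :
    χ (E ∩ F) = true := by
  rw [hχ.2.2.1 E F (hχ.mem_eCoset hE) (hχ.mem_eCoset hF), hE, hF, Bool.and_true]

theorem eq_true_of_subset (hχ : IsChar σ χ) (hE : χ E = true) (hF : F ∈ ECoset σ)
    (hEF : E ⊆ F) : χ F = true := by
  have h_and := hχ.2.2.1 E F (hχ.mem_eCoset hE) hF
  rwa [Set.inter_eq_left.2 hEF, hE, Bool.true_and, eq_comm] at h_and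

/-- The filter on `G` generated by the cosets on which the character `χ` is `1`. These cosets
already form a filter base. -/
def toFilter (hχ : IsChar σ χ) : Filter G where
  sets := {A | ∃ E, χ E = true ∧ E ⊆ A}
  univ_sets := ⟨Set.univ, hχ.2.1, subset_rfl⟩
  sets_of_superset := fun ⟨E, hE, hEA⟩ hAB => ⟨E, hE, hEA.trans hAB⟩
  inter_sets := fun ⟨E, hE, hEA⟩ ⟨F, hF, hFB⟩ =>
    ⟨E ∩ F, hχ.inter_eq_true hE hF, Set.inter_subset_inter hEA hFB⟩

theorem mem_toFilter (hχ : IsChar σ χ) {A : Set G} :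
    A ∈ hχ.toFilter ↔ ∃ E, χ E = true ∧ E ⊆ A :=
  Iff.rfl

theorem mem_toFilter_of_eq_true (hχ : IsChar σ χ) (hE : χ E = true) : E ∈ hχ.toFilter :=
  hχ.mem_toFilter.2 ⟨E, hE, subset_rfl⟩

instance toFilter_neBot (hχ : IsChar σ χ) : hχ.toFilter.NeBot := by
  refine Filter.neBot_iff.2 fun h_bot => ?_
  obtain ⟨E, hE, hE_empty⟩ := hχ.mem_toFilter.1 (Filter.empty_mem_iff_bot.2 h_bot)
  rw [Set.subset_empty_iff.1 hE_empty, hχ.1] at hE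
  exact Bool.false_ne_true hE

theorem smul_eq_smul_of_eq_true (hχ : IsChar σ χ) {p q : G} (hp : χ (p • E) = true)
    (hq : χ (q • E) = true) : p • E = q • E := by
  obtain ⟨x, hxp, hxq⟩ := hχ.toFilter.nonempty_of_mem
    (inter_mem (hχ.mem_toFilter_of_eq_true hp) (hχ.mem_toFilter_of_eq_true hq))
  exact ECoset.smul_eq_smul_of_mem
    ((ECoset.smul_mem_iff p).1 (hχ.mem_eCoset hp)) hxp hxq

theorem eventually_forall_mem_smul (hχ : IsChar σ χ) (E : Set G) :
    ∀ᶠ y in hχ.toFilter, ∀ p : G, χ (p • E) = true → y ∈ p • E := by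
  by_cases h : ∃ p : G, χ (p • E) = true
  · obtain ⟨p, hp⟩ := h
    filter_upwards [hχ.mem_toFilter_of_eq_true hp] with y hy q hq
    exact hχ.smul_eq_smul_of_eq_true hp hq ▸ hy
  · exact .of_forall fun y p hp => (h ⟨p, hp⟩).elim

end IsChar

theorem IsMaxChar.eventually_mem_iff (hinj : ∀ s, Function.Injective (σ s))
    {χ : Set G → Bool} (hχ : IsMaxChar σ χ) {F : Set G} (hF : F ∈ ECoset σ) :
    ∀ᶠ x in hχ.1.toFilter, (x ∈ F ↔ χ F = true) := by
  by_cases hχF : χ F = true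
  · filter_upwards [hχ.1.mem_toFilter_of_eq_true hχF] with x hx using iff_of_true hx hχF
  suffices h_compl : Fᶜ ∈ hχ.1.toFilter by
    filter_upwards [h_compl] with x hx using iff_of_false hx hχF
  -- Otherwise `F` could be adjoined to the filter of `χ`, against maximality.
  by_contra h_compl
  have : (hχ.1.toFilter ⊓ 𝓟 F).NeBot := by
    simpa only [compl_compl] using notMem_iff_inf_principal_compl.1 h_compl
  have h_le : charFilter χ ⊆ charFilter (charOfFilter σ (hχ.1.toFilter ⊓ 𝓟 F)) := fun E hE =>
    charOfFilter_eq_true_iff.2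
      ⟨hχ.1.mem_eCoset hE, mem_inf_of_left (hχ.1.mem_toFilter_of_eq_true hE)⟩
  have h_eq := hχ.2 _ (isChar_charOfFilter hinj _) h_le
  have hF_mem : F ∈ charFilter (charOfFilter σ (hχ.1.toFilter ⊓ 𝓟 F)) :=
    charOfFilter_eq_true_iff.2 ⟨hF, mem_inf_of_right (mem_principal_self F)⟩
  exact hχF (h_eq ▸ hF_mem : F ∈ charFilter χ)

theorem exists_forall_mem_iff_of_mem_boundary (hinj : ∀ s, Function.Injective (σ s))
    {ω : Set G → Bool} (hω : ω ∈ Boundary σ) (I : Finset (Set G)) :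
    ∃ x, ∀ E ∈ I, E ∈ ECoset σ → (x ∈ E ↔ ω E = true) := by
  obtain ⟨χ, hχ, hχω⟩ := mem_closure_iff_forall_finset_eq.1 hω.2 I
  have h_all : ∀ᶠ x in hχ.1.toFilter, ∀ E ∈ I, E ∈ ECoset σ → (x ∈ E ↔ χ E = true) :=
    (eventually_all_finset I).2 fun E _ =>
      eventually_imp_distrib_left.2 fun hE => hχ.eventually_mem_iff hinj hE
  obtain ⟨x, hx⟩ := h_all.exists
  exact ⟨x, fun E hE => hχω E hE ▸ hx E hE⟩

theorem exists_coset_of_mem_boundary (hinj : ∀ s, Function.Injective (σ s))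
    {ω : Set G → Bool} (hω : ω ∈ Boundary σ) (I : Finset (Set G)) :
    ∃ (x : G) (C : Subgroup G), IsConstructible σ C ∧ ω (x • (C : Set G)) = true ∧
      ∀ E ∈ I, E ∈ ECoset σ →
        (ω E = true → x • (C : Set G) ⊆ E) ∧ (x ∈ E → ω E = true) := by
  classical
  have h_all : ∀ᶠ y in hω.1.toFilter, ∀ E ∈ I, ω E = true → y ∈ E :=
    (eventually_all_finset I).2 fun E _ =>
      eventually_imp_distrib_left.2 hω.1.mem_toFilter_of_eq_true
  obtain ⟨A, hA, hAI⟩ := hω.1.mem_toFilter.1 h_all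
  obtain ⟨x, hx⟩ := exists_forall_mem_iff_of_mem_boundary hinj hω (insert A I)
  have hxA : x ∈ A := (hx A (I.mem_insert_self A) (hω.1.mem_eCoset hA)).2 hA
  obtain rfl | ⟨g, C, hC, rfl⟩ := hω.1.mem_eCoset hA
  · exact hxA.elim
  rw [leftCoset_eq_of_mem hxA] at hA hAI
  exact ⟨x, C, hC, hA, fun E hE hE_coset =>
    ⟨fun hωE y hy => hAI hy E hE hωE, (hx E (Finset.mem_insert_of_mem hE) hE_coset).1⟩⟩

theorem exists_mem_filC_forall_exists_charTranslate_eq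
    (hinj : ∀ s, Function.Injective (σ s)) {ω : Set G → Bool} (hω : ω ∈ Boundary σ)
    (I : Finset (Set G)) :
    ∃ C ∈ FilC σ ω, ∀ χ, IsChar σ χ → C ∈ FilC σ χ →
      ∃ k : G, ∀ E ∈ I, charTranslate k χ E = ω E := by
  obtain ⟨x, C, hC, hωC, hxI⟩ := exists_coset_of_mem_boundary hinj hω I
  refine ⟨C, ⟨hC, x, hωC⟩, fun χ hχ ⟨_, g, hg⟩ => ?_⟩
  have hI : ∀ᶠ y in hχ.toFilter, ∀ E ∈ I, ∀ p : G, χ (p • E) = true → y ∈ p • E :=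
    (eventually_all_finset I).2 fun E _ => hχ.eventually_forall_mem_smul E
  obtain ⟨y, hyC, hyI⟩ := (eventually_mem_set.2 (hχ.mem_toFilter_of_eq_true hg) |>.and hI).exists
  rw [leftCoset_eq_of_mem hyC] at hg
  refine ⟨x * y⁻¹, fun E hE => Bool.eq_iff_iff.2 ⟨fun hχE => ?_, fun hωE => ?_⟩⟩
  · have hxE : x ∈ E := by
      simpa [Set.mem_smul_set_iff_inv_smul_mem] using hyI E hE _ hχE
    exact (hxI E hE ((ECoset.smul_mem_iff _).1 (hχ.mem_eCoset hχE))).2 hxE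
  · have hE_coset := hω.1.mem_eCoset hωE
    have h_subset : y • (C : Set G) ⊆ (x * y⁻¹)⁻¹ • E := by
      rw [Set.subset_smul_set_iff, inv_inv, smul_smul, inv_mul_cancel_right]
      exact (hxI E hE hE_coset).1 hωE
    exact hχ.eq_true_of_subset hg (ECoset.smul_mem _ hE_coset) h_subset

theorem filC_charTranslate (k : G) (χ : Set G → Bool) :
    FilC σ (charTranslate k χ) = FilC σ χ := by
  ext C
  refine and_congr_right fun _ => ⟨fun ⟨g, hg⟩ => ⟨k⁻¹ * g, ?_⟩, fun ⟨g, hg⟩ => ⟨k * g, ?_⟩⟩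
  · rwa [mul_smul]
  · rwa [charTranslate, mul_smul, inv_smul_smul]

theorem filC_subset_of_mem_closure {𝔜 : Set (Set G → Bool)} {ω : Set G → Bool}
    (hω : ω ∈ closure 𝔜) : FilC σ ω ⊆ ⋃ χ ∈ 𝔜, FilC σ χ := by
  rintro C ⟨hC, g, hg⟩
  obtain ⟨χ, hχ, hχω⟩ := mem_closure_iff_forall_finset_eq.1 hω {g • (C : Set G)}
  exact Set.mem_biUnion hχ ⟨hC, g, (hχω _ (Finset.mem_singleton_self _)).trans hg⟩

theorem closure_of_translates_general (hinj : ∀ s, Function.Injective (σ s))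
    {𝔛 : Set (Set G → Bool)} (h𝔛 : ∀ χ ∈ 𝔛, IsChar σ χ) {ω : Set G → Bool}
    (hω : ω ∈ Boundary σ) :
    ω ∈ closure {χ' : Set G → Bool | ∃ (k : G) (χ : Set G → Bool),
        χ ∈ 𝔛 ∧ χ' = charTranslate k χ} ↔
      FilC σ ω ⊆ ⋃ χ ∈ 𝔛, FilC σ χ := by
  constructor
  · refine fun h => (filC_subset_of_mem_closure h).trans (Set.iUnion₂_subset ?_)
    rintro _ ⟨k, χ, hχ, rfl⟩
    rw [filC_charTranslate]
    exact Set.subset_biUnion_of_mem hχ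
  · refine fun h => mem_closure_iff_forall_finset_eq.2 fun I => ?_
    obtain ⟨C, hCω, hC⟩ := exists_mem_filC_forall_exists_charTranslate_eq hinj hω I
    obtain ⟨χ, hχ, hCχ⟩ := Set.mem_iUnion₂.1 (h hCω)
    obtain ⟨k, hk⟩ := hC χ (h𝔛 χ hχ) hCχ
    exact ⟨charTranslate k χ, ⟨k, χ, hχ, rfl⟩, hk⟩

end Characters

/-- Proposition 4.7 (prop:A-ClosureVSunion-closed): for `𝔛 ⊆ ∂Ê` and `ω ∈ ∂Ê`,
`ω` lies in the closure of `{t_k.χ : k ∈ G, χ ∈ 𝔛}` if and only if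
`𝔉(ω) ⊆ ⋃_{χ ∈ 𝔛} 𝔉(χ)`. -/
theorem closure_of_translates {S G : Type*} [Monoid S] [Group G] [Nontrivial G]
    (σ : S →* Monoid.End G)
    (hinj : ∀ s : S, Function.Injective (σ s))
    (hfaith : Function.Injective σ)
    (hna : ∃ s : S, Set.range (σ s : G → G) ≠ Set.univ)
    (𝔛 : Set (Set G → Bool)) (h𝔛 : 𝔛 ⊆ Boundary σ)
    (ω : Set G → Bool) (hω : ω ∈ Boundary σ) :
    ω ∈ closure {χ' : Set G → Bool | ∃ (k : G) (χ : Set G → Bool),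
        χ ∈ 𝔛 ∧ χ' = charTranslate k χ} ↔
      FilC σ ω ⊆ ⋃ χ ∈ 𝔛, FilC σ χ :=
  closure_of_translates_general hinj (fun _ hχ => (h𝔛 hχ).1) hω
end

section
/- Let σ: S ↷ G be an algebraic action. Assume that for all g, h ∈ G and all m ∈ ℤ_{>0}, g^m = h^m implies g = h, and assume σ satisfies the finite index property (FI): [G : σ_s(G)] < ∞ for all s ∈ S. Then I is 0-E-unitary: every φ ∈ I, for which there exists a nonempty S-constructible coset kD with kD ⊆ dom(φ) and φ|_{kD} = id_{kD}, satisfies φ = id_{dom(φ)}. In particular, I^e is E-unitary: every φ ∈ I^e that restricts to the identity on some C ∈ 𝒞 with C ⊆ dom(φ) equals id_{dom(φ)}. -/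
open scoped Pointwise

/-!
Partial bijections of `G` in `I` have graphs that are closed under `p * q⁻¹ * r` in `G × G`, since
this holds for graphs of endomorphisms and of translations and survives composition and inversion.
If such a graph contains `(k, k)` and `(k * u, k * v)`, it contains `(k * u ^ n, k * v ^ n)` for all
`n`. A constructible subgroup `D` contains `u ^ n` for some `n > 0`: this passes from the ranges of
the `σ_s` to all constructible subgroups. If the graph also contains the diagonal of `k • D`, then
`u ^ n = v ^ n`, and uniqueness of roots gives `u = v`.
-/

/-- The isolator `{g | ∃ m > 0, g ^ m ∈ D}` of the subgroup `D` is the whole group. A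
weakening of finite index, stated elementwise because the isolator need not be a subgroup. -/
def HasFullIsolator {G : Type*} [Group G] (D : Subgroup G) : Prop :=
  ∀ g : G, ∃ m : ℕ, 0 < m ∧ g ^ m ∈ D

/-- Subheaps of a group: the sets closed under `p * q⁻¹ * r`, that is, the empty set and the cosets
of subgroups. Applied to the graph of a partial bijection of `G`, a subset of `G × G`, this says
that the bijection respects the heap structure of `G`. -/
def IsSubheap {H : Type*} [Group H] (A : Set H) : Prop :=
  ∀ ⦃p q r : H⦄, p ∈ A → q ∈ A → r ∈ A → p * q⁻¹ * r ∈ A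

/-- The relation on `G` with graph `φ` is a partial bijection. -/
def IsPartialBijection {G : Type*} (φ : Set (G × G)) : Prop :=
  Relator.BiUnique fun x y => (x, y) ∈ φ

namespace HasFullIsolator

variable {G H : Type*} [Group G] [Group H]

theorem of_index_ne_zero {D : Subgroup G} (hD : D.index ≠ 0) : HasFullIsolator D := fun g =>
  let ⟨m, hm, _, hgm⟩ := Subgroup.exists_pow_mem_of_index_ne_zero hD g
  ⟨m, hm, hgm⟩

protected theorem top : HasFullIsolator (⊤ : Subgroup G) :=
  fun _ => ⟨1, one_pos, Subgroup.mem_top _⟩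

protected theorem comap {D : Subgroup H} (hD : HasFullIsolator D) (f : G →* H) :
    HasFullIsolator (D.comap f) := fun g =>
  let ⟨m, hm, hgm⟩ := hD (f g)
  ⟨m, hm, by rwa [Subgroup.mem_comap, map_pow]⟩

protected theorem map {D : Subgroup G} (hD : HasFullIsolator D) {f : G →* H}
    (hf : HasFullIsolator f.range) : HasFullIsolator (D.map f) := by
  intro h
  obtain ⟨m, hm, g, hg⟩ := hf h
  obtain ⟨n, hn, hgn⟩ := hD g
  exact ⟨m * n, Nat.mul_pos hm hn, g ^ n, hgn, by rw [map_pow, hg, pow_mul]⟩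

end HasFullIsolator

theorem IsConstructible.hasFullIsolator {S G : Type*} [Monoid S] [Group G]
    {σ : S →* Monoid.End G} (hσ : ∀ s : S, HasFullIsolator (MonoidHom.range (σ s : G →* G)))
    {D : Subgroup G} (hD : IsConstructible σ D) : HasFullIsolator D := by
  induction hD with
  | top => exact .top
  | map s C _ hC => exact hC.map (hσ s)
  | comap s C _ hC => exact hC.comap (σ s)

namespace IsSubheap

theorem mul_pow_mem {H : Type*} [Group H] {A : Set H} (hA : IsSubheap A) {p q : H}
    (hp : p ∈ A) (hq : q ∈ A) (n : ℕ) : p * (p⁻¹ * q) ^ n ∈ A := by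
  induction n with
  | zero => simpa using hp
  | succ n ih => simpa [pow_succ, mul_assoc] using hA ih hp hq

variable {G : Type*} [Group G]

protected theorem grph {f : G → G} (hf : ∀ x y z, f (x * y⁻¹ * z) = f x * (f y)⁻¹ * f z) :
    IsSubheap (grph f) := by
  rintro ⟨x, _⟩ ⟨y, _⟩ ⟨z, _⟩ (rfl : _ = f x) (rfl : _ = f y) (rfl : _ = f z)
  exact (hf x y z).symm

protected theorem rcomp {φ ψ : Set (G × G)}
    (hφ : IsSubheap φ) (hψ : IsSubheap ψ) : IsSubheap (rcomp φ ψ) := by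
  rintro p q r ⟨x, hpx, hxp⟩ ⟨y, hqy, hyq⟩ ⟨z, hrz, hzr⟩
  exact ⟨x * y⁻¹ * z, hψ hpx hqy hrz, hφ hxp hyq hzr⟩

protected theorem rinv {φ : Set (G × G)} (hφ : IsSubheap φ) : IsSubheap (rinv φ) :=
  fun _ _ _ hp hq hr => hφ hp hq hr

end IsSubheap

namespace IsPartialBijection

variable {G : Type*}

protected theorem grph {f : G → G} (hf : Function.Injective f) : IsPartialBijection (grph f) :=
  ⟨fun _ _ _ hx hy => hf (hx.symm.trans hy), fun _ _ _ hy hz => hy.trans hz.symm⟩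

protected theorem rcomp {φ ψ : Set (G × G)}
    (hφ : IsPartialBijection φ) (hψ : IsPartialBijection ψ) : IsPartialBijection (rcomp φ ψ) := by
  constructor
  · rintro x y z ⟨u, hxu, huz⟩ ⟨v, hyv, hvz⟩
    obtain rfl := hφ.1 huz hvz
    exact hψ.1 hxu hyv
  · rintro x y z ⟨u, hxu, huy⟩ ⟨v, hxv, hvz⟩
    obtain rfl := hψ.2 hxu hxv
    exact hφ.2 huy hvz

protected theorem rinv {φ : Set (G × G)} (hφ : IsPartialBijection φ) :
    IsPartialBijection (rinv φ) :=
  ⟨fun _ _ _ hx hy => hφ.2 hx hy, fun _ _ _ hy hz => hφ.1 hy hz⟩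

end IsPartialBijection

namespace MemInvSemigroup

variable {G : Type*} {gens : Set (Set (G × G))} {φ : Set (G × G)}

theorem mono {gens' : Set (Set (G × G))} (h : gens ⊆ gens') (hφ : MemInvSemigroup gens φ) :
    MemInvSemigroup gens' φ := by
  induction hφ with
  | base φ hφ => exact .base φ (h hφ)
  | comp φ ψ _ _ hφ hψ => exact .comp φ ψ hφ hψ
  | inv φ _ hφ => exact .inv φ hφ

theorem isPartialBijection (hφ : MemInvSemigroup gens φ)
    (h : ∀ ψ ∈ gens, IsPartialBijection ψ) : IsPartialBijection φ := by
  induction hφ with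
  | base φ hφ => exact h φ hφ
  | comp φ ψ _ _ hφ hψ => exact hφ.rcomp hψ
  | inv φ _ hφ => exact hφ.rinv

theorem isSubheap [Group G] (hφ : MemInvSemigroup gens φ) (h : ∀ ψ ∈ gens, IsSubheap ψ) :
    IsSubheap φ := by
  induction hφ with
  | base φ hφ => exact h φ hφ
  | comp φ ψ _ _ hφ hψ => exact hφ.rcomp hψ
  | inv φ _ hφ => exact hφ.rinv

end MemInvSemigroup

section InverseSemigroup

variable {S G : Type*} [Monoid S] [Group G] {σ : S →* Monoid.End G} {φ : Set (G × G)}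

theorem memIe.memI (hφ : memIe σ φ) : memI σ φ :=
  MemInvSemigroup.mono Set.subset_union_left hφ

theorem memI.isPartialBijection (hσ : ∀ s : S, Function.Injective (σ s)) (hφ : memI σ φ) :
    IsPartialBijection φ := by
  refine MemInvSemigroup.isPartialBijection hφ ?_
  rintro _ (⟨s, rfl⟩ | ⟨g, rfl⟩)
  · exact .grph (hσ s)
  · exact .grph (mul_right_injective g)

theorem memI.isSubheap (hφ : memI σ φ) : IsSubheap φ := by
  refine MemInvSemigroup.isSubheap hφ ?_
  rintro _ (⟨s, rfl⟩ | ⟨g, rfl⟩)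
  · exact .grph fun x y z => by simp only [map_mul, map_inv]
  · exact .grph fun x y z => by group

end InverseSemigroup

theorem eq_idOn_rdom_of_forall_eq {G : Type*} {φ : Set (G × G)}
    (h : ∀ x y, (x, y) ∈ φ → x = y) : φ = idOn (rdom φ) := by
  ext ⟨x, y⟩
  constructor
  · exact fun hxy => ⟨h x y hxy, y, hxy⟩
  · rintro ⟨rfl : x = y, z, hxz⟩
    obtain rfl := h x z hxz
    exact hxz

theorem IsSubheap.eq_idOn_rdom {G : Type*} [Group G] [IsMulTorsionFree G] {φ : Set (G × G)}
    (hφ : IsSubheap φ) (hfun : Relator.RightUnique fun x y => (x, y) ∈ φ)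
    {k : G} {D : Subgroup G} (hD : HasFullIsolator D) (hid : idOn (k • (D : Set G)) ⊆ φ) :
    φ = idOn (rdom φ) := by
  refine eq_idOn_rdom_of_forall_eq fun x y hxy => ?_
  have hfix : ∀ d ∈ D, (k * d, k * d) ∈ φ := fun d hd => hid ⟨rfl, d, hd, rfl⟩
  have hk : (k, k) ∈ φ := by simpa using hfix 1 D.one_mem
  obtain ⟨m, hm, hmD⟩ := hD (k⁻¹ * x)
  have hpow : (k * (k⁻¹ * x) ^ m, k * (k⁻¹ * y) ^ m) ∈ φ := hφ.mul_pow_mem hk hxy m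
  have hroot : (k⁻¹ * x) ^ m = (k⁻¹ * y) ^ m := mul_left_cancel (hfun (hfix _ hmD) hpow)
  exact mul_left_cancel (pow_left_injective hm.ne' hroot)

theorem zero_E_unitary_of_FI_general {S G : Type*} [Monoid S] [Group G] [IsMulTorsionFree G]
    (σ : S →* Monoid.End G)
    (hinj : ∀ s : S, Function.Injective (σ s))
    (hrange : ∀ s : S, HasFullIsolator (MonoidHom.range (σ s : G →* G))) :
    (∀ φ : Set (G × G), memI σ φ →
        (∃ (k : G) (D : Subgroup G), IsConstructible σ D ∧ idOn (k • (D : Set G)) ⊆ φ) →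
        φ = idOn (rdom φ)) ∧
    (∀ φ : Set (G × G), memIe σ φ →
        (∃ C : Subgroup G, IsConstructible σ C ∧ idOn (C : Set G) ⊆ φ) →
        φ = idOn (rdom φ)) := by
  have zero_E_unitary : ∀ φ, memI σ φ → ∀ (k : G) (D : Subgroup G), IsConstructible σ D →
      idOn (k • (D : Set G)) ⊆ φ → φ = idOn (rdom φ) := fun φ hφ k D hD hid =>
    hφ.isSubheap.eq_idOn_rdom (hφ.isPartialBijection hinj).2 (hD.hasFullIsolator hrange) hid
  constructor
  · rintro φ hφ ⟨k, D, hD, hid⟩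
    exact zero_E_unitary φ hφ k D hD hid
  · rintro φ hφ ⟨C, hC, hid⟩
    exact zero_E_unitary φ hφ.memI 1 C hC (by rwa [one_smul])

/-- Proposition 7.5 (prop:(FI)to(JF)): if `G` has unique `m`-th roots
(`g^m = h^m ⟹ g = h`) and σ satisfies the finite index property (FI), then `I`
is 0-E-unitary; in particular `I^e` is E-unitary. -/
theorem zero_E_unitary_of_FI {S G : Type*} [Monoid S] [Group G] [Nontrivial G]
    (σ : S →* Monoid.End G)
    (hinj : ∀ s : S, Function.Injective (σ s))
    (hfaith : Function.Injective σ)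
    (hroots : ∀ (g h : G) (m : ℕ), 0 < m → g ^ m = h ^ m → g = h)
    (hFI : ∀ s : S, (MonoidHom.range (σ s : G →* G)).index ≠ 0) :
    (∀ φ : Set (G × G), memI σ φ →
        (∃ (k : G) (D : Subgroup G), IsConstructible σ D ∧ idOn (k • (D : Set G)) ⊆ φ) →
        φ = idOn (rdom φ)) ∧
    (∀ φ : Set (G × G), memIe σ φ →
        (∃ C : Subgroup G, IsConstructible σ C ∧ idOn ((C : Subgroup G) : Set G) ⊆ φ) →
        φ = idOn (rdom φ)) := by
  have : IsMulTorsionFree G := ⟨fun m hm g h => hroots g h m (Nat.pos_of_ne_zero hm)⟩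
  exact zero_E_unitary_of_FI_general σ hinj fun s => .of_index_ne_zero (hFI s)
end
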